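/- Let (α, μ) be a measure space, let m ≥ 1 be a natural number, set p = 2m, and let E be a real inner product space. Then the function Lp(μ; E) → ℝ defined by f ↦ ∫ ‖f(x)‖^{2m} dμ(x) (equivalently f ↦ ∫ (⟨f(x), f(x)⟩)^m dμ(x)) is infinitely Fréchet differentiable (of class C^∞) on the Banach space Lp(μ; E). -/

import Mathlib

open MeasureTheory ENNReal

/-! By Hölder's inequality, a bounded bilinear map on values induces a bounded bilinear, hence
analytic, map between `Lᵖ` spaces. Iterating this for the multiplication of a normed algebra shows
that `g ↦ gᵐ` is smooth from `Lᵐ` to `L¹`, on which the Bochner integral is continuous and linear.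
It remains to substitute `g = ⟪f, f⟫`, which is smooth from `L²ᵐ` to `Lᵐ`. -/

section Exponents

variable {p q : ℝ≥0∞} {k : ℕ}

theorem holderTriple_of_inv_eq_succ_mul_inv (hq : q⁻¹ = (k + 1 : ℕ) * p⁻¹) :
    HolderTriple (k * p⁻¹)⁻¹ p q :=
  ⟨by rw [hq, inv_inv, Nat.cast_add_one, add_one_mul]⟩

theorem holderTriple_two_mul_self (p : ℝ≥0∞) : HolderTriple (2 * p) (2 * p) p :=
  ⟨by rw [ENNReal.mul_inv (by simp) (by simp), ← add_mul, ENNReal.inv_two_add_inv_two, one_mul]⟩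

theorem one_le_natCast_of_one_le_two_mul (h : 1 ≤ (2 * k : ℝ≥0∞)) : 1 ≤ (k : ℝ≥0∞) := by
  norm_cast at h ⊢
  lia

end Exponents

section Smoothness

variable {α 𝕜 X E F G A : Type*} [MeasurableSpace α] {μ : Measure α} [NontriviallyNormedField 𝕜]
  [NormedAddCommGroup X] [NormedSpace 𝕜 X] [NormedAddCommGroup E] [NormedSpace 𝕜 E]
  [NormedAddCommGroup F] [NormedSpace 𝕜 F] [NormedAddCommGroup G] [NormedSpace 𝕜 G]
  [NormedRing A] {p q r : ℝ≥0∞} {k : ℕ} {n : WithTop ℕ∞}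

theorem contDiff_holder [Fact (1 ≤ p)] [Fact (1 ≤ q)] [Fact (1 ≤ r)] [HolderTriple p q r]
    (B : E →L[𝕜] F →L[𝕜] G) {u : X → Lp E p μ} {v : X → Lp F q μ}
    (hu : ContDiff 𝕜 n u) (hv : ContDiff 𝕜 n v) :
    ContDiff 𝕜 n fun x => B.holder r (u x) (v x) :=
  ((B.holderL μ p q r).contDiff.comp hu).clm_apply hv

-- The exponent `q = p / k` is written with inverses so that `k = 0` and `q = ∞`, the start of the
-- induction, need no case distinction on `p`.
theorem memLp_pow {f : α → A} (hf : MemLp f p μ) (hq : q⁻¹ = k * p⁻¹) :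
    MemLp (fun x => f x ^ k) q μ := by
  induction k generalizing q with
  | zero =>
    obtain rfl : q = ∞ := by simpa using hq
    simpa only [pow_zero] using memLp_top_const (1 : A)
  | succ k ih =>
    have := holderTriple_of_inv_eq_succ_mul_inv hq
    simp only [pow_succ]
    exact hf.mul (ih (inv_inv _))

theorem contDiff_toLp_pow [NormedAlgebra 𝕜 A] [Fact (1 ≤ p)] [Fact (1 ≤ q)]
    (hq : q⁻¹ = k * p⁻¹) :
    ContDiff 𝕜 n fun f : Lp A p μ => (memLp_pow (Lp.memLp f) hq).toLp (fun x => f x ^ k) := by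
  induction k generalizing q with
  | zero =>
    obtain rfl : q = ∞ := by simpa using hq
    simp only [pow_zero]
    exact contDiff_const (c := (memLp_top_const (1 : A)).toLp _)
  | succ k ih =>
    have := holderTriple_of_inv_eq_succ_mul_inv hq
    have : Fact (1 ≤ (k * p⁻¹)⁻¹) := ⟨(Fact.out : 1 ≤ q).trans (HolderTriple.le _ p q)⟩
    have h_eq (f : Lp A p μ) : (memLp_pow (Lp.memLp f) hq).toLp (fun x => f x ^ (k + 1)) =
        (ContinuousLinearMap.mul 𝕜 A).holder q
          ((memLp_pow (Lp.memLp f) (inv_inv _)).toLp (fun x => f x ^ k)) f := by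
      refine MemLp.toLp_congr _ _ ?_
      filter_upwards [(memLp_pow (Lp.memLp f) (inv_inv (k * p⁻¹))).coeFn_toLp] with x hx
      rw [hx, ContinuousLinearMap.mul_apply', pow_succ]
    simp only [h_eq]
    exact contDiff_holder _ (ih (inv_inv _)) contDiff_id

variable [NormedAlgebra 𝕜 A] [NormedSpace ℝ A] [SMulCommClass ℝ 𝕜 A] [CompleteSpace A]

theorem contDiff_integral_pow (k : ℕ) [Fact (1 ≤ (k : ℝ≥0∞))] :
    ContDiff 𝕜 n fun f : Lp A k μ => ∫ x, f x ^ k ∂μ := by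
  have hk : (1 : ℝ≥0∞)⁻¹ = k * (k : ℝ≥0∞)⁻¹ := by
    rw [ENNReal.mul_inv_cancel (one_pos.trans_le Fact.out).ne' (by simp), inv_one]
  have h_integral (f : Lp A k μ) : ∫ x, f x ^ k ∂μ =
      L1.integralCLM' 𝕜 ((memLp_pow (Lp.memLp f) hk).toLp (fun x => f x ^ k)) := by
    rw [← L1.integral_eq', L1.integral_eq_integral]
    exact integral_congr_ae (MemLp.coeFn_toLp _).symm
  simp only [h_integral]
  exact (L1.integralCLM' (E := A) 𝕜).contDiff.comp (contDiff_toLp_pow hk)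

theorem stmt_5_general (μ : Measure α) (B : E →L[𝕜] E →L[𝕜] A) (m : ℕ)
    [Fact (1 ≤ (2 * m : ℝ≥0∞))] :
    ContDiff 𝕜 n fun f : Lp E (2 * m : ℝ≥0∞) μ => ∫ x, B (f x) (f x) ^ m ∂μ := by
  have : Fact (1 ≤ (m : ℝ≥0∞)) := ⟨one_le_natCast_of_one_le_two_mul Fact.out⟩
  have := holderTriple_two_mul_self (m : ℝ≥0∞)
  have h_integral (f : Lp E (2 * m : ℝ≥0∞) μ) :
      ∫ x, B (f x) (f x) ^ m ∂μ = ∫ x, B.holder m f f x ^ m ∂μ :=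
    integral_congr_ae ((B.coeFn_holder f f).symm.fun_comp (· ^ m))
  simp only [h_integral]
  exact (contDiff_integral_pow m).comp (contDiff_holder B contDiff_id contDiff_id)

end Smoothness

/-- For `p = 2m` a positive even integer and `E` a real inner product space,
the functional `f ↦ ∫ ‖f x‖^(2m) dμ` is `C^∞` on `Lᵖ(μ; E)`. -/
theorem stmt_5 {α : Type*} [MeasurableSpace α] (μ : Measure α)
    (m : ℕ) (hm : 1 ≤ m) [Fact (1 ≤ (2 * m : ℝ≥0∞))]
    {E : Type*} [NormedAddCommGroup E] [InnerProductSpace ℝ E] :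
    ContDiff ℝ (⊤ : ℕ∞) (fun f : Lp E (2 * m : ℝ≥0∞) μ => ∫ x, ‖f x‖ ^ (2 * m) ∂μ) := by
  simp only [pow_mul, ← real_inner_self_eq_norm_sq]
  exact stmt_5_general μ (innerSL ℝ) m
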